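/- arXiv:2503.04564 — 2 statements merged into one kernel-verified Lean document; each statement's English description precedes it below -/
import Mathlib

section
/- In the cyclic hierarchical secure aggregation model (no security constraints needed), for every user k ∈ {1,…,K}: H({X_{k,i}}_{i∈B_k} | {W_{k'}, Z_{k'}}_{k'∈{1,…,K}∖{k}}) ≥ L. -/
/-!
Fix a user `k` and let `A` collect the inputs and keys of all the other users.

* A vanishing conditional entropy `H(X | Y) = 0` forces `X` to be determined by `Y` on the support
  of `p` (`eq_of_condEnt_eq_zero`). The messages of the other users are therefore determined by `A`,
  so the messages of user `k` together with `A` determine all messages, hence all `Y i`, hence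
  `∑ j, W j`, hence `W k`, whose other summands are part of `A`. Entropy cannot increase
  under such a dependence (`ent_le_of_determined`), so `H(W_k, A) ≤ H(X_k, A)`.
* The inputs are uniform and independent of the keys, so `W k` is uniform given `A`
  (`pr_input_others`), whence `H(W_k, A) = L + H(A)` (`ent_pair_of_uniform`).

Subtracting `H(A)` gives the bound. The entropies are handled throughout as averages
`-∑ ω, p ω * log (pr p X (X ω))` over the sample space (`ent_eq_sum`), which reduces each entropy
fact to a pointwise comparison of probabilities.
-/

open scoped BigOperators

noncomputable def pr {Ω : Type} [Fintype Ω] {α : Type} [DecidableEq α]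
    (p : Ω → ℝ) (X : Ω → α) (a : α) : ℝ :=
  ∑ ω, if X ω = a then p ω else 0

noncomputable def ent {Ω : Type} [Fintype Ω] {α : Type} [Fintype α] [DecidableEq α]
    (q : ℕ) (p : Ω → ℝ) (X : Ω → α) : ℝ :=
  -∑ a, pr p X a * Real.logb q (pr p X a)

noncomputable def condEnt {Ω : Type} [Fintype Ω] {α β : Type}
    [Fintype α] [DecidableEq α] [Fintype β] [DecidableEq β]
    (q : ℕ) (p : Ω → ℝ) (X : Ω → α) (Y : Ω → β) : ℝ :=
  ent q p (fun ω => (X ω, Y ω)) - ent q p Y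

noncomputable def mutInfo {Ω : Type} [Fintype Ω] {α β : Type}
    [Fintype α] [DecidableEq α] [Fintype β] [DecidableEq β]
    (q : ℕ) (p : Ω → ℝ) (X : Ω → α) (Y : Ω → β) : ℝ :=
  ent q p X + ent q p Y - ent q p (fun ω => (X ω, Y ω))

noncomputable def condMutInfo {Ω : Type} [Fintype Ω] {α β γ : Type}
    [Fintype α] [DecidableEq α] [Fintype β] [DecidableEq β] [Fintype γ] [DecidableEq γ]
    (q : ℕ) (p : Ω → ℝ) (X : Ω → α) (Y : Ω → β) (Z : Ω → γ) : ℝ :=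
  condEnt q p X Z + condEnt q p Y Z - condEnt q p (fun ω => (X ω, Y ω)) Z

def IsPMF {Ω : Type} [Fintype Ω] (p : Ω → ℝ) : Prop :=
  (∀ ω, 0 ≤ p ω) ∧ ∑ ω, p ω = 1

def IndepRV {Ω : Type} [Fintype Ω] {α β : Type} [DecidableEq α] [DecidableEq β]
    (p : Ω → ℝ) (X : Ω → α) (Y : Ω → β) : Prop :=
  ∀ a b, pr p (fun ω => (X ω, Y ω)) (a, b) = pr p X a * pr p Y b

/-- The set of `B` relays `{k, k+1, …, k+B−1}` (indices mod `K`) associated with user `k`. -/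
def Bset (K B : ℕ) (k : Fin K) : Finset (Fin K) :=
  (Finset.range B).image fun j => ⟨((k : ℕ) + j) % K, Nat.mod_lt _ k.pos⟩

/-- The set of users associated with relay `i`. -/
def Uset (K B : ℕ) (i : Fin K) : Finset (Fin K) :=
  Finset.univ.filter fun k => i ∈ Bset K B k

section Entropy

variable {Ω : Type} [Fintype Ω] {α β : Type} [DecidableEq α] [DecidableEq β]

lemma le_pr_apply {p : Ω → ℝ} (hp : IsPMF p) (X : Ω → α) (ω : Ω) : p ω ≤ pr p X (X ω) := by
  have h := Finset.single_le_sum (f := fun ω' => if X ω' = X ω then p ω' else 0)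
    (fun ω' _ => by split_ifs; exacts [hp.1 ω', le_rfl]) (Finset.mem_univ ω)
  simpa [pr] using h

/-- If `U` determines `V` on the support of `p`, each fibre of `U` is, up to a null set, inside a
fibre of `V`. -/
lemma pr_le_pr_of_determined {p : Ω → ℝ} (hp : IsPMF p) (U : Ω → α) (V : Ω → β)
    (h : ∀ ω ω', 0 < p ω → 0 < p ω' → U ω = U ω' → V ω = V ω') (ω : Ω) (hω : 0 < p ω) :
    pr p U (U ω) ≤ pr p V (V ω) := by
  unfold pr
  refine Finset.sum_le_sum fun ω' _ => ?_
  rcases (hp.1 ω').eq_or_lt with h0 | h0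
  · simp [← h0]
  · by_cases hU : U ω' = U ω
    · simp [hU, h ω' ω h0 hω hU]
    · rw [if_neg hU]
      split_ifs
      exacts [h0.le, le_rfl]

/-- Law of total probability for a function of a random variable. -/
lemma pr_comp [Fintype α] (p : Ω → ℝ) (V : Ω → α) (h : α → β) (b : β) :
    pr p (fun ω => h (V ω)) b = ∑ v, if h v = b then pr p V v else 0 := by
  unfold pr
  simp_rw [← Finset.sum_filter (fun v => h v = b)]
  rw [Finset.sum_comm]
  refine Finset.sum_congr rfl fun ω _ => ?_
  simp [Finset.sum_ite_eq]

/-- Entropy as an average of information content over the sample space. -/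
lemma ent_eq_sum [Fintype α] (q : ℕ) (p : Ω → ℝ) (X : Ω → α) :
    ent q p X = -∑ ω, p ω * Real.logb q (pr p X (X ω)) := by
  unfold ent
  congr 1
  have : ∀ a, pr p X a * Real.logb q (pr p X a)
      = ∑ ω, if X ω = a then p ω * Real.logb q (pr p X a) else 0 := by
    intro a
    conv_lhs => rw [pr, Finset.sum_mul]
    exact Finset.sum_congr rfl fun ω _ => by split_ifs <;> simp [pr]
  simp_rw [this]
  rw [Finset.sum_comm]
  exact Finset.sum_congr rfl fun ω _ => by simp

lemma ent_le_of_determined [Fintype α] [Fintype β] {q : ℕ} (hq : 1 < q) {p : Ω → ℝ}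
    (hp : IsPMF p) (U : Ω → α) (V : Ω → β)
    (h : ∀ ω ω', 0 < p ω → 0 < p ω' → U ω = U ω' → V ω = V ω') :
    ent q p V ≤ ent q p U := by
  rw [ent_eq_sum, ent_eq_sum]
  refine neg_le_neg (Finset.sum_le_sum fun ω _ => ?_)
  rcases (hp.1 ω).eq_or_lt with h0 | h0
  · simp [← h0]
  · exact mul_le_mul_of_nonneg_left (Real.logb_le_logb_of_le (by exact_mod_cast hq)
      (h0.trans_le (le_pr_apply hp U ω)) (pr_le_pr_of_determined hp U V h ω h0)) h0.le

/-- If `H(X | Y) = 0` then `Y` determines `X` on the support of `p`. -/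
lemma eq_of_condEnt_eq_zero [Fintype α] [Fintype β] {q : ℕ} (hq : 1 < q) {p : Ω → ℝ}
    (hp : IsPMF p) (X : Ω → α) (Y : Ω → β) (h : condEnt q p X Y = 0)
    {ω ω' : Ω} (hω : 0 < p ω) (hω' : 0 < p ω') (hY : Y ω = Y ω') : X ω = X ω' := by
  have hq' : (1 : ℝ) < q := by exact_mod_cast hq
  set XY : Ω → α × β := fun ω => (X ω, Y ω)
  have hle : ∀ ω, 0 < p ω → pr p XY (XY ω) ≤ pr p Y (Y ω) :=
    pr_le_pr_of_determined hp XY Y fun _ _ _ _ e => (Prod.ext_iff.1 e).2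
  have hterm : ∀ ω ∈ Finset.univ,
      p ω * Real.logb q (pr p XY (XY ω)) ≤ p ω * Real.logb q (pr p Y (Y ω)) := by
    intro ω _
    rcases (hp.1 ω).eq_or_lt with h0 | h0
    · simp [← h0]
    · exact mul_le_mul_of_nonneg_left (Real.logb_le_logb_of_le hq'
        (h0.trans_le (le_pr_apply hp XY ω)) (hle ω h0)) h0.le
  -- The two averages agree and are ordered termwise, so they agree termwise.
  have hsum : ∑ ω, p ω * Real.logb q (pr p XY (XY ω))
      = ∑ ω, p ω * Real.logb q (pr p Y (Y ω)) := by
    rw [condEnt, ent_eq_sum, ent_eq_sum] at h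
    linarith
  have heq := mul_left_cancel₀ hω.ne'
    ((Finset.sum_eq_sum_iff_of_le hterm).1 hsum ω (Finset.mem_univ ω))
  have hpr : pr p XY (XY ω) = pr p Y (Y ω) :=
    Real.logb_injOn_pos hq' (hω.trans_le (le_pr_apply hp XY ω))
      (hω.trans_le (le_pr_apply hp Y ω)) heq
  -- A point `ω'` with the same `Y` and another `X` would make the fibre of `Y` strictly heavier.
  by_contra hne
  refine absurd hpr (ne_of_lt ?_)
  unfold pr
  refine Finset.sum_lt_sum (fun υ _ => ?_) ⟨ω', Finset.mem_univ _, ?_⟩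
  · by_cases hv : XY υ = XY ω
    · rw [if_pos hv, if_pos (Prod.ext_iff.1 hv).2]
    · rw [if_neg hv]
      split_ifs
      exacts [hp.1 υ, le_rfl]
  · rwa [if_neg fun e => hne (Prod.ext_iff.1 e).1.symm, if_pos hY.symm]

/-- A variable that is uniform on `q ^ L` values given `A` adds exactly `L` to the entropy. -/
lemma ent_pair_of_uniform [Fintype α] [Fintype β] {q : ℕ} (hq : 1 < q) {p : Ω → ℝ}
    (hp : IsPMF p) (U : Ω → α) (A : Ω → β) (L : ℕ)
    (h : ∀ u a, pr p A a = (q : ℝ) ^ L * pr p (fun ω => (U ω, A ω)) (u, a)) :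
    ent q p (fun ω => (U ω, A ω)) = L + ent q p A := by
  have hq' : (1 : ℝ) < q := by exact_mod_cast hq
  rw [ent_eq_sum, ent_eq_sum]
  have : ∀ ω, p ω * Real.logb q (pr p A (A ω))
      = p ω * L + p ω * Real.logb q (pr p (fun ω => (U ω, A ω)) (U ω, A ω)) := by
    intro ω
    rcases (hp.1 ω).eq_or_lt with h0 | h0
    · simp [← h0]
    · have hpos := h0.trans_le (le_pr_apply hp (fun ω => (U ω, A ω)) ω)
      rw [h (U ω) (A ω), Real.logb_mul (by positivity) hpos.ne', Real.logb_pow,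
        Real.logb_self_eq_one hq']
      ring
  simp_rw [this]
  rw [Finset.sum_add_distrib, ← Finset.sum_mul, hp.2]
  ring

end Entropy

/-- If the family `W` is uniform and independent of the family `Z`, then `W k` is uniform given
the inputs and keys of all indices other than `k`. -/
lemma pr_input_others {K L : ℕ} {F : Type} [Fintype F] [DecidableEq F]
    {Ω : Type} [Fintype Ω] (p : Ω → ℝ) {ζ : Type} [Fintype ζ] [DecidableEq ζ]
    (W : Fin K → Ω → (Fin L → F)) (Z : Fin K → Ω → ζ) (c : ℝ)
    (hW : ∀ w : Fin K → Fin L → F, pr p (fun ω => fun k => W k ω) w = c)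
    (hWZ : IndepRV p (fun ω => fun k => W k ω) (fun ω => fun k => Z k ω))
    (k : Fin K) (u : Fin L → F) (a : {k' : Fin K // k' ≠ k} → (Fin L → F) × ζ) :
    pr p (fun ω => fun k' : {k' : Fin K // k' ≠ k} => (W k'.1 ω, Z k'.1 ω)) a
      = (Fintype.card F : ℝ) ^ L * pr p (fun ω => (W k ω,
          fun k' : {k' : Fin K // k' ≠ k} => (W k'.1 ω, Z k'.1 ω))) (u, a) := by
  -- The joint probability does not depend on the value of `W k`.
  have key : ∀ u : Fin L → F, pr p (fun ω => (W k ω,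
      fun k' : {k' : Fin K // k' ≠ k} => (W k'.1 ω, Z k'.1 ω))) (u, a)
      = ∑ z : Fin K → ζ, if (∀ k' : {k' : Fin K // k' ≠ k}, z k'.1 = (a k').2)
          then c * pr p (fun ω => fun k => Z k ω) z else 0 := by
    intro u
    rw [pr_comp p (fun ω => ((fun k => W k ω), (fun k => Z k ω)))
      (fun v : (Fin K → Fin L → F) × (Fin K → ζ) => (v.1 k,
        fun k' : {k' : Fin K // k' ≠ k} => (v.1 k'.1, v.2 k'.1))) (u, a),
      Fintype.sum_prod_type_right]
    refine Finset.sum_congr rfl fun z _ => ?_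
    -- The only input vector that contributes is the one assembled from `u` and `a`.
    rw [Finset.sum_eq_single (fun j => if h : j = k then u else (a ⟨j, h⟩).1)]
    · rw [hWZ, hW]
      refine if_congr ?_ rfl rfl
      simp only [Prod.ext_iff, funext_iff]
      constructor
      · exact fun h k' => (h.2 k').2
      · intro h
        refine ⟨by simp, fun k' => ⟨by simp [k'.2], h k'⟩⟩
    · intro w _ hne
      refine if_neg fun h => hne ?_
      obtain ⟨h1, h2⟩ := Prod.ext_iff.1 h
      funext j
      by_cases hj : j = k
      · subst hj
        simpa using h1
      · simpa [hj] using congrArg Prod.fst (congrFun h2 ⟨j, hj⟩)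
    · simp
  rw [pr_comp p (fun ω => (W k ω,
      fun k' : {k' : Fin K // k' ≠ k} => (W k'.1 ω, Z k'.1 ω))) Prod.snd a,
    Fintype.sum_prod_type]
  simp [key]

/-- paper's Lemma 2, inequality (16): in the cyclic hierarchical secure
aggregation model (no security constraints needed), for every user `k`,
`H({X_{k,i}}_{i ∈ B_k} | {W_{k'}, Z_{k'}}_{k' ≠ k}) ≥ L`. -/
theorem hsa_cutset_bound_on_X
    {K B L : ℕ} (hK : 2 ≤ K) (hB1 : 1 ≤ B) (hBK : B ≤ K) (hL : 1 ≤ L)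
    {F : Type} [Field F] [Fintype F] [DecidableEq F]
    {Ω : Type} [Fintype Ω] (p : Ω → ℝ) (hp : IsPMF p)
    {ζ χ υ : Type} [Fintype ζ] [DecidableEq ζ] [Fintype χ] [DecidableEq χ]
    [Fintype υ] [DecidableEq υ]
    (W : Fin K → Ω → (Fin L → F)) (Z : Fin K → Ω → ζ)
    (Xm : Fin K → Fin K → Ω → χ) (Y : Fin K → Ω → υ)
    -- the inputs are i.i.d. uniform on 𝔽_q^L
    (hW : ∀ w : Fin K → Fin L → F,
      pr p (fun ω => fun k => W k ω) w = 1 / (Fintype.card F : ℝ) ^ (K * L))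
    -- the inputs are independent of the keys
    (hWZ : IndepRV p (fun ω => fun k => W k ω) (fun ω => fun k => Z k ω))
    -- user messages are functions of the user's input and key
    (hX : ∀ k : Fin K,
      condEnt (Fintype.card F) p
        (fun ω => fun i : {i // i ∈ Bset K B k} => Xm k i.1 ω)
        (fun ω => (W k ω, Z k ω)) = 0)
    -- relay messages are functions of the received messages
    (hY : ∀ i : Fin K,
      condEnt (Fintype.card F) p (Y i)
        (fun ω => fun k : {k // k ∈ Uset K B i} => Xm k.1 i ω) = 0)
    -- the server recovers the sum of the inputs
    (hRec : condEnt (Fintype.card F) p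
      (fun ω => ∑ k, W k ω) (fun ω => fun i => Y i ω) = 0) :
    ∀ k : Fin K,
      condEnt (Fintype.card F) p
        (fun ω => fun i : {i // i ∈ Bset K B k} => Xm k i.1 ω)
        (fun ω => fun k' : {k' : Fin K // k' ≠ k} => (W k'.1 ω, Z k'.1 ω)) ≥ L := by
  intro k
  have hq : 1 < Fintype.card F := Fintype.one_lt_card
  have hU := ent_pair_of_uniform hq hp (W k)
    (fun ω => fun k' : {k' : Fin K // k' ≠ k} => (W k'.1 ω, Z k'.1 ω)) L
    (pr_input_others p W Z _ hW hWZ k)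
  have hle := ent_le_of_determined hq hp
    (fun ω => ((fun i : {i // i ∈ Bset K B k} => Xm k i.1 ω),
      (fun k' : {k' : Fin K // k' ≠ k} => (W k'.1 ω, Z k'.1 ω))))
    (fun ω => (W k ω, (fun k' : {k' : Fin K // k' ≠ k} => (W k'.1 ω, Z k'.1 ω)))) (by
    intro ω ω' hω hω' he
    obtain ⟨h1, h2⟩ := Prod.ext_iff.1 he
    refine Prod.ext ?_ h2
    have hA : ∀ j, j ≠ k → (W j ω, Z j ω) = (W j ω', Z j ω') := fun j hj => congrFun h2 ⟨j, hj⟩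
    have hXeq : ∀ j, ∀ i ∈ Bset K B j, Xm j i ω = Xm j i ω' := by
      intro j i hi
      by_cases hj : j = k
      · subst hj
        exact congrFun h1 ⟨i, hi⟩
      · exact congrFun (eq_of_condEnt_eq_zero hq hp _ _ (hX j) hω hω' (hA j hj)) ⟨i, hi⟩
    have hYeq : ∀ i, Y i ω = Y i ω' := fun i =>
      eq_of_condEnt_eq_zero hq hp _ _ (hY i) hω hω' (funext fun j =>
        hXeq j.1 i (Finset.mem_filter.1 j.2).2)
    have hS : ∑ j, W j ω = ∑ j, W j ω' :=
      eq_of_condEnt_eq_zero hq hp _ _ hRec hω hω' (funext hYeq)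
    rw [← Finset.add_sum_erase _ _ (Finset.mem_univ k),
      ← Finset.add_sum_erase _ (fun j => W j ω') (Finset.mem_univ k),
      Finset.sum_congr rfl fun j hj =>
        (Prod.ext_iff.1 (hA j (Finset.ne_of_mem_erase hj))).1] at hS
    exact add_right_cancel hS)
  rw [condEnt, ge_iff_le]
  linarith
end

section
/- Converse bound R_X ≥ 1: in the cyclic hierarchical secure aggregation model (no security constraints needed), for every user k ∈ {1,…,K}: Σ_{i∈B_k} H(X_{k,i}) ≥ L. -/
/-!
Fix a user `k` and let `V = (W_{-k}, Z)` collect all other inputs and all keys. A vanishing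
conditional entropy means functional dependence on the support of `p` (`condEnt_zero`), so following
messages, relays and recovery shows that on the support the bundle `X_k = (X_{k,i})_{i ∈ B_k}`
together with `V` determines `∑ j, W j`, hence `W k`. As `W k` is uniform and independent of `V`
(`pr_uniform`), this gives the pointwise bound `P(X_k = x, V = v) ≤ q ^ (-L) * P(V = v)`.

Gibbs' inequality (`gibbs`), comparing the law of `(X_k, V)` with the product law
`(∏ i, P(X_{k,i} = x_i)) * P(V = v)`, says that the expectation of
`∑ i, log P(X_{k,i}) + log P(V)` is at most that of `log P(X_k, V)`, hence at most that of
`log P(V) - L`. The `V` terms cancel, leaving `∑ i, H(X_{k,i}) ≥ L`.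
-/

open scoped BigOperators

section aux

variable {Ω : Type} [Fintype Ω] {α β : Type} [DecidableEq α] [DecidableEq β]
  {p : Ω → ℝ}

lemma pr_nonneg (hp : ∀ ω, 0 ≤ p ω) (X : Ω → α) (a : α) : 0 ≤ pr p X a :=
  Finset.sum_nonneg fun ω _ => by split_ifs <;> simp [hp ω]

lemma pr_pos (hp : ∀ ω, 0 ≤ p ω) (X : Ω → α) {ω : Ω} (h : 0 < p ω) : 0 < pr p X (X ω) := by
  refine Finset.sum_pos' (fun ω' _ => ?_) ⟨ω, Finset.mem_univ _, by simpa using h⟩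
  split_ifs <;> simp [hp ω']

/-- An event contained, on the support of `p`, in another one is at most as likely. -/
lemma pr_le (hp : ∀ ω, 0 ≤ p ω) (X : Ω → α) (Y : Ω → β) (a : α) (b : β)
    (h : ∀ ω, 0 < p ω → X ω = a → Y ω = b) : pr p X a ≤ pr p Y b := by
  refine Finset.sum_le_sum fun ω _ => ?_
  rcases (hp ω).eq_or_lt with h0 | h0
  · simp [← h0]
  · by_cases h1 : X ω = a
    · simp [h1, h ω h0 h1]
    · simp only [h1, if_false]
      split_ifs <;> simp [hp ω]

/-- Change of variables: the expectation of `g (X ω)` is computed by the law of `X`. -/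
lemma sum_comp [Fintype α] (X : Ω → α) (g : α → ℝ) :
    ∑ ω, p ω * g (X ω) = ∑ a, pr p X a * g a := by
  simp only [pr, Finset.sum_mul]
  rw [Finset.sum_comm]
  refine Finset.sum_congr rfl fun ω _ => ?_
  simp

lemma sum_pr [Fintype α] (hp : ∑ ω, p ω = 1) (X : Ω → α) : ∑ a, pr p X a = 1 := by
  simpa [hp] using (sum_comp (p := p) X (fun _ => 1)).symm

lemma ent_eq [Fintype α] (q : ℕ) (X : Ω → α) :
    ent q p X = -∑ ω, p ω * Real.logb q (pr p X (X ω)) := by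
  rw [ent, ← sum_comp X fun a => Real.logb q (pr p X a)]

/-- If `H(X | Y) = 0` then, on the support of `p`, the value of `Y` determines that of `X`. -/
lemma condEnt_zero [Fintype α] [Fintype β] {q : ℕ} (hq : 1 < q) (hp : ∀ ω, 0 ≤ p ω)
    (X : Ω → α) (Y : Ω → β) (h : condEnt q p X Y = 0) {ω ω' : Ω} (hω : 0 < p ω)
    (hω' : 0 < p ω') (hY : Y ω = Y ω') : X ω = X ω' := by
  have hq' : (1 : ℝ) < q := by exact_mod_cast hq
  have hle : ∀ ω, pr p (fun ω => (X ω, Y ω)) (X ω, Y ω) ≤ pr p Y (Y ω) := fun ω =>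
    pr_le hp _ _ _ _ fun ω' _ h => (Prod.ext_iff.1 h).2
  have hpos : ∀ ω, 0 < p ω → 0 < pr p (fun ω => (X ω, Y ω)) (X ω, Y ω) := fun ω h =>
    pr_pos hp (fun ω => (X ω, Y ω)) h
  have hterm : ∀ ω ∈ Finset.univ, 0 ≤ p ω * (Real.logb q (pr p Y (Y ω)) -
      Real.logb q (pr p (fun ω => (X ω, Y ω)) (X ω, Y ω))) := by
    intro ω _
    rcases (hp ω).eq_or_lt with h0 | h0
    · simp [← h0]
    · exact mul_nonneg (hp ω) (sub_nonneg.2 (Real.logb_le_logb_of_le hq' (hpos ω h0) (hle ω)))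
  have hsum : ∑ ω, p ω * (Real.logb q (pr p Y (Y ω)) -
      Real.logb q (pr p (fun ω => (X ω, Y ω)) (X ω, Y ω))) = 0 := by
    rw [condEnt, ent_eq, ent_eq] at h
    simp only [mul_sub, Finset.sum_sub_distrib]
    linarith
  have h1 := (Finset.sum_eq_zero_iff_of_nonneg hterm).1 hsum ω (Finset.mem_univ _)
  have h2 : Real.logb q (pr p Y (Y ω)) =
      Real.logb q (pr p (fun ω => (X ω, Y ω)) (X ω, Y ω)) := by
    rcases mul_eq_zero.1 h1 with h1 | h1 <;> linarith
  have h3 : pr p Y (Y ω) = pr p (fun ω => (X ω, Y ω)) (X ω, Y ω) :=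
    Real.logb_injOn_pos hq' (pr_pos hp Y hω) (hpos ω hω) h2
  by_contra hne
  -- otherwise `ω'` contributes to the law of `Y` at `Y ω` but not to that of `(X, Y)`
  refine absurd h3 (ne_of_gt (Finset.sum_lt_sum (fun ω'' _ => ?_) ⟨ω', Finset.mem_univ _, ?_⟩))
  · by_cases h4 : Y ω'' = Y ω
    · simp only [h4, if_true]
      split_ifs <;> simp [hp ω'']
    · simp [h4]
  · have : ¬ X ω' = X ω := fun h => hne h.symm
    simpa [this, hY] using hω'

/-- Gibbs' inequality: among sub-probability vectors `r`, the expectation of `log (r T)` is largest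
when `r` is the law of `T`. -/
lemma gibbs [Fintype α] {q : ℕ} (hq : 1 < q) (hp : IsPMF p) (T : Ω → α) (r : α → ℝ)
    (hr : ∀ a, 0 ≤ r a) (hr1 : ∑ a, r a ≤ 1) (hpos : ∀ ω, 0 < p ω → 0 < r (T ω)) :
    ∑ ω, p ω * Real.logb q (r (T ω)) ≤ ∑ ω, p ω * Real.logb q (pr p T (T ω)) := by
  have hq' : 0 < Real.log q := Real.log_pos (by exact_mod_cast hq)
  have key : ∀ ω, p ω * Real.log (r (T ω)) - p ω * Real.log (pr p T (T ω)) ≤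
      p ω * (r (T ω) / pr p T (T ω)) - p ω := by
    intro ω
    rcases (hp.1 ω).eq_or_lt with h0 | h0
    · simp [← h0]
    · have hP := pr_pos hp.1 T h0
      have := Real.log_le_sub_one_of_pos (div_pos (hpos ω h0) hP)
      rw [Real.log_div (hpos ω h0).ne' hP.ne'] at this
      nlinarith
  have h1 := Finset.sum_le_sum fun ω (_ : ω ∈ Finset.univ) => key ω
  simp only [Finset.sum_sub_distrib] at h1
  rw [hp.2, sum_comp T fun a => r a / pr p T a] at h1
  have h2 : ∑ a, pr p T a * (r a / pr p T a) ≤ ∑ a, r a := by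
    refine Finset.sum_le_sum fun a _ => ?_
    by_cases h : pr p T a = 0
    · simp [h, hr a]
    · rw [mul_div_cancel₀ _ h]
  simp only [Real.logb, ← mul_div_assoc, ← Finset.sum_div]
  exact div_le_div_of_nonneg_right (by linarith) hq'.le

/-- If `W` is uniform on `Fin K → G` (each tuple having probability `c`) and independent of `Z`,
then given `Z` and all coordinates of `W` but the `k`-th, that coordinate is uniform on `G`.
Forgetting the `k`-th coordinate is encoded as overwriting it by `0`. -/
lemma pr_uniform {K : ℕ} {G : Type} [Fintype G] [DecidableEq G] [Zero G]
    (W : Ω → Fin K → G) (Z : Ω → α) {c : ℝ} (hW : ∀ w, pr p W w = c)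
    (hWZ : IndepRV p W Z) (k : Fin K) (w : Fin K → G) (z : α) :
    (Fintype.card G : ℝ) * pr p (fun ω => (W ω, Z ω)) (w, z) =
      pr p (fun ω => (Function.update (W ω) k 0, Z ω)) (Function.update w k 0, z) := by
  have h1 : pr p (fun ω => (Function.update (W ω) k 0, Z ω)) (Function.update w k 0, z) =
      ∑ u : G, pr p (fun ω => (W ω, Z ω)) (Function.update w k u, z) := by
    simp only [pr]
    rw [Finset.sum_comm]
    refine Finset.sum_congr rfl fun ω _ => ?_
    have h2 : ∀ u, W ω = Function.update w k u ↔
        Function.update (W ω) k 0 = Function.update w k 0 ∧ W ω k = u := by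
      intro u
      constructor
      · intro h
        rw [h]
        simp
      · rintro ⟨h, rfl⟩
        rw [← Function.update_idem (0 : G) (W ω k) w, ← h]
        simp
    simp only [Prod.mk.injEq, h2]
    by_cases h3 : Function.update (W ω) k 0 = Function.update w k 0 <;> by_cases h4 : Z ω = z <;>
      simp [h3, h4]
  rw [h1]
  simp only [hWZ _ _, hW]
  simp

end aux

/-- converse bound `R_X ≥ 1`: for every user `k`,
`Σ_{i ∈ B_k} H(X_{k,i}) ≥ L`. -/
theorem hsa_RX_ge_one
    {K B L : ℕ} (hK : 2 ≤ K) (hB1 : 1 ≤ B) (hBK : B ≤ K) (hL : 1 ≤ L)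
    {F : Type} [Field F] [Fintype F] [DecidableEq F]
    {Ω : Type} [Fintype Ω] (p : Ω → ℝ) (hp : IsPMF p)
    {ζ χ υ : Type} [Fintype ζ] [DecidableEq ζ] [Fintype χ] [DecidableEq χ]
    [Fintype υ] [DecidableEq υ]
    (W : Fin K → Ω → (Fin L → F)) (Z : Fin K → Ω → ζ)
    (Xm : Fin K → Fin K → Ω → χ) (Y : Fin K → Ω → υ)
    -- the inputs are i.i.d. uniform on 𝔽_q^L
    (hW : ∀ w : Fin K → Fin L → F,
      pr p (fun ω => fun k => W k ω) w = 1 / (Fintype.card F : ℝ) ^ (K * L))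
    -- the inputs are independent of the keys
    (hWZ : IndepRV p (fun ω => fun k => W k ω) (fun ω => fun k => Z k ω))
    -- user messages are functions of the user's input and key
    (hX : ∀ k : Fin K,
      condEnt (Fintype.card F) p
        (fun ω => fun i : {i // i ∈ Bset K B k} => Xm k i.1 ω)
        (fun ω => (W k ω, Z k ω)) = 0)
    -- relay messages are functions of the received messages
    (hY : ∀ i : Fin K,
      condEnt (Fintype.card F) p (Y i)
        (fun ω => fun k : {k // k ∈ Uset K B i} => Xm k.1 i ω) = 0)
    -- the server recovers the sum of the inputs
    (hRec : condEnt (Fintype.card F) p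
      (fun ω => ∑ k, W k ω) (fun ω => fun i => Y i ω) = 0) :
    ∀ k : Fin K, (∑ i ∈ Bset K B k, ent (Fintype.card F) p (Xm k i)) ≥ L := by
  intro k
  set q := Fintype.card F with hqdef
  have hq : 1 < q := Fintype.one_lt_card
  have hq' : (1 : ℝ) < q := by exact_mod_cast hq
  have hq0 : (0 : ℝ) < q := by linarith
  let X : Ω → ({i // i ∈ Bset K B k} → χ) := fun ω i => Xm k i.1 ω
  let V : Ω → (Fin K → Fin L → F) × (Fin K → ζ) :=
    fun ω => (Function.update (fun j => W j ω) k 0, fun j => Z j ω)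
  -- on the support, `(X, V)` determines all inputs and keys
  have hdet : ∀ ω ω', 0 < p ω → 0 < p ω' → X ω' = X ω → V ω' = V ω →
      (fun j => W j ω', fun j => Z j ω') = ((fun j => W j ω, fun j => Z j ω) :
        (Fin K → Fin L → F) × (Fin K → ζ)) := by
    intro ω ω' h0 h0' hXX hVV
    have hZ : ∀ j, Z j ω' = Z j ω := fun j => congrFun (Prod.ext_iff.1 hVV).2 j
    have hWj : ∀ j, j ≠ k → W j ω' = W j ω := fun j hj => by
      have := congrFun (Prod.ext_iff.1 hVV).1 j
      simpa [V, hj] using this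
    have hXj : ∀ j, ∀ i ∈ Bset K B j, Xm j i ω' = Xm j i ω := by
      intro j i hi
      by_cases hj : j = k
      · subst hj
        exact congrFun hXX ⟨i, hi⟩
      · have := condEnt_zero hq hp.1 _ _ (hX j) h0' h0 (by simp [hWj j hj, hZ j])
        exact congrFun this ⟨i, hi⟩
    have hYi : ∀ i, Y i ω' = Y i ω := fun i =>
      condEnt_zero hq hp.1 _ _ (hY i) h0' h0 <| funext fun j =>
        hXj j.1 i (Finset.mem_filter.1 j.2).2
    have hS : ∑ j, W j ω' = ∑ j, W j ω :=
      condEnt_zero hq hp.1 _ _ hRec h0' h0 (funext hYi)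
    have hWk : W k ω' = W k ω := by
      rw [← Finset.add_sum_erase _ _ (Finset.mem_univ k),
        ← Finset.add_sum_erase _ (fun j => W j ω) (Finset.mem_univ k),
        Finset.sum_congr rfl fun j hj => hWj j (Finset.ne_of_mem_erase hj)] at hS
      exact add_right_cancel hS
    refine Prod.ext (funext fun j => ?_) (funext hZ)
    by_cases hj : j = k
    · subst hj
      exact hWk
    · exact hWj j hj
  have hbound : ∀ ω, 0 < p ω →
      (q : ℝ) ^ L * pr p (fun ω => (X ω, V ω)) (X ω, V ω) ≤ pr p V (V ω) := by
    intro ω h0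
    have h1 := pr_uniform _ _ hW hWZ k (fun j => W j ω) (fun j => Z j ω)
    have h2 : (Fintype.card (Fin L → F) : ℝ) = (q : ℝ) ^ L := by simp [hqdef]
    rw [h2] at h1
    refine le_trans ?_ h1.le
    refine mul_le_mul_of_nonneg_left ?_ (by positivity)
    exact pr_le hp.1 _ _ _ _ fun ω' h0' h =>
      hdet ω ω' h0 h0' (Prod.ext_iff.1 h).1 (Prod.ext_iff.1 h).2
  let r : ({i // i ∈ Bset K B k} → χ) × ((Fin K → Fin L → F) × (Fin K → ζ)) → ℝ :=
    fun a => (∏ i, pr p (Xm k i.1) (a.1 i)) * pr p V a.2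
  have hg := gibbs hq hp (fun ω => (X ω, V ω)) r
    (fun a => mul_nonneg (Finset.prod_nonneg fun i _ => pr_nonneg hp.1 _ _) (pr_nonneg hp.1 _ _))
    (by
      rw [Fintype.sum_prod_type]
      simp only [r, ← Finset.mul_sum, sum_pr hp.2 V, mul_one]
      rw [← Fintype.prod_sum (fun (i : {i // i ∈ Bset K B k}) c => pr p (Xm k i.1) c)]
      simp [sum_pr hp.2])
    (fun ω h0 => mul_pos (Finset.prod_pos fun i _ => pr_pos hp.1 (Xm k i.1) h0)
      (pr_pos hp.1 V h0))
  have hl : ∑ ω, p ω * Real.logb q (r (X ω, V ω)) =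
      (∑ i : {i // i ∈ Bset K B k}, ∑ ω, p ω * Real.logb q (pr p (Xm k i.1) (Xm k i.1 ω))) +
        ∑ ω, p ω * Real.logb q (pr p V (V ω)) := by
    rw [Finset.sum_comm, ← Finset.sum_add_distrib]
    refine Finset.sum_congr rfl fun ω _ => ?_
    rw [← Finset.mul_sum, ← mul_add]
    rcases (hp.1 ω).eq_or_lt with h0 | h0
    · simp [← h0]
    · have hX0 : ∀ i : {i // i ∈ Bset K B k}, pr p (Xm k i.1) (Xm k i.1 ω) ≠ 0 :=
        fun i => (pr_pos hp.1 (Xm k i.1) h0).ne'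
      simp only [r, X]
      rw [Real.logb_mul (Finset.prod_ne_zero_iff.2 fun i _ => hX0 i) (pr_pos hp.1 V h0).ne',
        Real.logb_prod _ _ fun i _ => hX0 i]
  have hu : ∑ ω, p ω * Real.logb q (pr p (fun ω => (X ω, V ω)) (X ω, V ω)) ≤
      (∑ ω, p ω * Real.logb q (pr p V (V ω))) - L := by
    have : (L : ℝ) = ∑ ω, p ω * L := by rw [← Finset.sum_mul, hp.2, one_mul]
    rw [this, ← Finset.sum_sub_distrib]
    refine Finset.sum_le_sum fun ω _ => ?_
    rw [← mul_sub]
    rcases (hp.1 ω).eq_or_lt with h0 | h0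
    · simp [← h0]
    · refine mul_le_mul_of_nonneg_left ?_ (hp.1 ω)
      have hP := pr_pos hp.1 (fun ω => (X ω, V ω)) h0
      have h1 := Real.logb_le_logb_of_le hq' (by positivity) (hbound ω h0)
      rw [Real.logb_mul (by positivity) hP.ne', Real.logb_pow, Real.logb_self_eq_one hq'] at h1
      linarith
  have he : ∑ i ∈ Bset K B k, ent q p (Xm k i) =
      -∑ i : {i // i ∈ Bset K B k}, ∑ ω, p ω * Real.logb q (pr p (Xm k i.1) (Xm k i.1 ω)) := by
    rw [← Finset.sum_coe_sort, ← Finset.sum_neg_distrib]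
    exact Finset.sum_congr rfl fun i _ => ent_eq q _
  rw [he]
  linarith
end
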